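/- For every integer n ≥ 1, ∑_{π ∈ S_n} (-1)^{inv(π)} ∏_{j ∈ RLMv(π)} x_j = (∏_{i ∈ [n], i odd} x_i)(∏_{j ∈ [n], j even} (x_j - 1)), as an identity of polynomials in the commuting variables x_1,…,x_n. -/

import Mathlib

open Finset MvPolynomial

/-- Number of inversions of a permutation of `Fin n`
(pairs `p.1 < p.2` with `π p.1 > π p.2`). -/
def inversions {n : ℕ} (π : Equiv.Perm (Fin n)) : ℕ :=
  (Finset.univ.filter fun p : Fin n × Fin n => p.1 < p.2 ∧ π p.2 < π p.1).card

/-- Excedance indices of a permutation. -/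
def EXCi {n : ℕ} (π : Equiv.Perm (Fin n)) : Finset (Fin n) :=
  Finset.univ.filter fun i => i < π i

/-- Excedance values of a permutation. -/
def EXCv {n : ℕ} (π : Equiv.Perm (Fin n)) : Finset (Fin n) :=
  (EXCi π).image π

/-- Right-to-left minima indices of a permutation. -/
def RLMi {n : ℕ} (π : Equiv.Perm (Fin n)) : Finset (Fin n) :=
  Finset.univ.filter fun i => ∀ j, i < j → π i < π j

/-- Right-to-left minima values of a permutation. -/
def RLMv {n : ℕ} (π : Equiv.Perm (Fin n)) : Finset (Fin n) :=
  (RLMi π).image π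

/-- The derangements of `Fin n`, i.e. permutations with no fixed point. -/
def derangementsF (n : ℕ) : Finset (Equiv.Perm (Fin n)) :=
  Finset.univ.filter fun π => ∀ i, π i ≠ i

/-
The permutations of `[n + 1]` arise from those of `[n]` by inserting the largest value `n + 1`
at an arbitrary position. If `k` letters stand to its right, the insertion creates `k` new
inversions, it preserves the old right-to-left minima, and `n + 1` is itself a right-to-left
minimum exactly when `k = 0`. So, weighting inversions by `q`, each step multiplies the
generating function by `x_{n+1} + q + q² + ⋯ + qⁿ`. At `q = -1` this factor is `x_{n+1}` when
`n + 1` is odd and `x_{n+1} - 1` when it is even.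
-/

section

variable {n : ℕ}

/-- The permutation of `Fin (n + 1)` whose one-line notation is that of `σ` with the largest value
inserted at position `p`. -/
def insertMax (p : Fin (n + 1)) (σ : Equiv.Perm (Fin n)) : Equiv.Perm (Fin (n + 1)) :=
  ((finSuccEquiv' p).trans σ.optionCongr).trans (finSuccEquiv' (Fin.last n)).symm

@[simp]
lemma insertMax_self (p : Fin (n + 1)) (σ : Equiv.Perm (Fin n)) :
    insertMax p σ p = Fin.last n := by
  simp [insertMax]

@[simp]
lemma insertMax_succAbove (p : Fin (n + 1)) (σ : Equiv.Perm (Fin n)) (i : Fin n) :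
    insertMax p σ (p.succAbove i) = (σ i).castSucc := by
  simp [insertMax]

lemma insertMax_lt_last_iff {p j : Fin (n + 1)} {σ : Equiv.Perm (Fin n)} :
    insertMax p σ j < Fin.last n ↔ j ≠ p := by
  rw [Fin.lt_last_iff_ne_last, ← insertMax_self p σ, (insertMax p σ).injective.ne_iff]

lemma insertMax_injective2 : Function.Injective2 (insertMax (n := n)) := by
  intro p p' σ σ' h
  obtain rfl : p = p' := by
    apply (insertMax p' σ').injective
    rw [insertMax_self, ← h, insertMax_self]
  refine ⟨rfl, Equiv.ext fun i => Fin.castSucc_injective n ?_⟩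
  rw [← insertMax_succAbove p, h, insertMax_succAbove]

lemma insertMax_uncurry_bijective : Function.Bijective (Function.uncurry (insertMax (n := n))) :=
  (Fintype.bijective_iff_injective_and_card _).2
    ⟨insertMax_injective2.uncurry, by simp [Fintype.card_perm, Nat.factorial_succ]⟩

lemma sum_perm_succ_eq_sum_insertMax {M : Type*} [AddCommMonoid M]
    (f : Equiv.Perm (Fin (n + 1)) → M) :
    ∑ π, f π = ∑ p, ∑ σ, f (insertMax p σ) := by
  rw [← insertMax_uncurry_bijective.sum_comp, Fintype.sum_prod_type]
  rfl

lemma inversions_eq_sum_card (π : Equiv.Perm (Fin n)) :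
    inversions π = ∑ i, #{j | i < j ∧ π j < π i} := by
  simp only [inversions, card_filter, Fintype.sum_prod_type]

lemma inversions_insertMax (p : Fin (n + 1)) (σ : Equiv.Perm (Fin n)) :
    inversions (insertMax p σ) = p.rev + inversions σ := by
  have card_inversions_max : #{j | p < j ∧ insertMax p σ j < insertMax p σ p} = (p.rev : ℕ) := by
    have later_positions : univ.filter (fun j => p < j ∧ j ≠ p) = Ioi p := by
      ext j
      simpa using fun hpj : p < j => hpj.ne'
    simp only [insertMax_self, insertMax_lt_last_iff, later_positions, Fin.card_Ioi, Fin.val_rev]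
    omega
  have card_inversions_old (i : Fin n) :
      #{j | p.succAbove i < j ∧ insertMax p σ j < insertMax p σ (p.succAbove i)} =
        #{j | i < j ∧ σ j < σ i} := by
    simp only [card_filter, Fin.sum_univ_succAbove _ p]
    simp [(Fin.le_last _).not_gt]
  simp only [inversions_eq_sum_card, Fin.sum_univ_succAbove _ p, card_inversions_max,
    card_inversions_old]

lemma mem_RLMi {π : Equiv.Perm (Fin n)} {i : Fin n} : i ∈ RLMi π ↔ ∀ j, i < j → π i < π j := by
  simp [RLMi]

lemma self_mem_RLMi_insertMax (p : Fin (n + 1)) (σ : Equiv.Perm (Fin n)) :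
    p ∈ RLMi (insertMax p σ) ↔ p = Fin.last n := by
  simp only [mem_RLMi, insertMax_self, (Fin.le_last _).not_gt, imp_false, not_lt]
  exact ⟨fun h => Fin.last_le_iff.1 (h _), fun h j => h ▸ j.le_last⟩

lemma succAbove_mem_RLMi_insertMax (p : Fin (n + 1)) (σ : Equiv.Perm (Fin n)) (i : Fin n) :
    p.succAbove i ∈ RLMi (insertMax p σ) ↔ i ∈ RLMi σ := by
  simp [mem_RLMi, Fin.forall_iff_succAbove p, Fin.castSucc_lt_last]

lemma prod_RLMv {M : Type*} [CommMonoid M] (π : Equiv.Perm (Fin n)) (x : Fin n → M) :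
    ∏ j ∈ RLMv π, x j = ∏ i, if i ∈ RLMi π then x (π i) else 1 := by
  rw [RLMv, prod_image π.injective.injOn, prod_ite_mem, univ_inter]

lemma prod_RLMv_insertMax {M : Type*} [CommMonoid M] (p : Fin (n + 1))
    (σ : Equiv.Perm (Fin n)) (x : Fin (n + 1) → M) :
    ∏ j ∈ RLMv (insertMax p σ), x j =
      (if p = Fin.last n then x (Fin.last n) else 1) * ∏ j ∈ RLMv σ, x j.castSucc := by
  simp only [prod_RLMv, prod_RLMv σ fun j => x j.castSucc, Fin.prod_univ_succAbove _ p,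
    self_mem_RLMi_insertMax, succAbove_mem_RLMi_insertMax, insertMax_self, insertMax_succAbove]

lemma sum_pow_rev_mul_ite_last {R : Type*} [Semiring R] (q y : R) :
    ∑ p : Fin (n + 1), q ^ (p.rev : ℕ) * (if p = Fin.last n then y else 1) =
      y + ∑ k ∈ range n, q ^ (k + 1) := by
  rw [← Equiv.sum_comp Fin.revPerm, Fin.sum_univ_succ, sum_range]
  simp [Fin.rev_eq_iff]

theorem sum_pow_inversions_mul_prod_RLMv {R : Type*} [CommSemiring R] (q : R) (x : Fin n → R) :
    ∑ π : Equiv.Perm (Fin n), q ^ inversions π * ∏ j ∈ RLMv π, x j =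
      ∏ j : Fin n, (x j + ∑ k ∈ range (j : ℕ), q ^ (k + 1)) := by
  induction n with
  | zero => simp [inversions, prod_RLMv]
  | succ n ih =>
    calc
      _ = ∑ p : Fin (n + 1), ∑ σ : Equiv.Perm (Fin n),
            (q ^ (p.rev : ℕ) * if p = Fin.last n then x (Fin.last n) else 1) *
              (q ^ inversions σ * ∏ j ∈ RLMv σ, x j.castSucc) := by
        simp only [sum_perm_succ_eq_sum_insertMax, inversions_insertMax, prod_RLMv_insertMax,
          pow_add, mul_mul_mul_comm]
      _ = (x (Fin.last n) + ∑ k ∈ range n, q ^ (k + 1)) *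
            ∏ j : Fin n, (x j.castSucc + ∑ k ∈ range (j : ℕ), q ^ (k + 1)) := by
        rw [← sum_mul_sum, sum_pow_rev_mul_ite_last, ih]
      _ = _ := by
        rw [Fin.prod_univ_castSucc, mul_comm]
        simp only [Fin.val_castSucc, Fin.val_last]

lemma sum_range_neg_one_pow_succ {R : Type*} [Ring R] (m : ℕ) :
    ∑ k ∈ range m, (-1 : R) ^ (k + 1) = if Even m then 0 else -1 := by
  simp only [pow_succ, ← sum_mul, neg_one_geom_sum, ite_mul, zero_mul, one_mul]

theorem stmt11_general {R : Type*} [CommRing R] (x : Fin n → R) :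
    ∑ π : Equiv.Perm (Fin n), (-1) ^ inversions π * ∏ j ∈ RLMv π, x j =
      (∏ i ∈ {i : Fin n | Odd ((i : ℕ) + 1)}, x i) *
        ∏ j ∈ {j : Fin n | Even ((j : ℕ) + 1)}, (x j - 1) := by
  simp only [sum_pow_inversions_mul_prod_RLMv, sum_range_neg_one_pow_succ,
    ← Nat.not_even_iff_odd, prod_filter, ← prod_mul_distrib]
  refine prod_congr rfl fun j _ => ?_
  by_cases h : Even (j : ℕ) <;> simp [Nat.even_add_one, h, sub_eq_add_neg]

end

/-- Here `Fin n` represents `[n]` via `i ↦ i + 1`, so `i ∈ [n]` is odd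
iff `(i : ℕ) + 1` is odd. -/
theorem stmt11 (n : ℕ) (hn : 1 ≤ n) :
    ∑ π : Equiv.Perm (Fin n),
      ((-1 : MvPolynomial (Fin n) ℤ) ^ inversions π) * ∏ j ∈ RLMv π, X j
    = (∏ i ∈ Finset.univ.filter (fun i : Fin n => Odd ((i : ℕ) + 1)),
          (X i : MvPolynomial (Fin n) ℤ))
        * ∏ j ∈ Finset.univ.filter (fun j : Fin n => Even ((j : ℕ) + 1)),
            ((X j : MvPolynomial (Fin n) ℤ) - 1) :=
  stmt11_general X
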